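/- Let ω ⊂ ℝ^d be a nonempty open connected set, v : ℝ^d → ℝ^d a Lipschitz, uniformly bounded vector field, and μ⁰ a compactly supported probability measure on ℝ^d. Suppose there exist T₀* > 0 and a nonempty open set ω₀ with closure contained in ω such that for each x⁰ ∈ supp(μ⁰) there exists t⁰ ∈ [0, T₀*] with Φ_{t⁰}^v(x⁰) ∈ ω₀. Then there exists a pair (𝟙_ω u, μ) consisting of a Borel vector field 𝟙_ω u : ℝ^d × ℝ⁺ → ℝ^d vanishing outside ω and a time-evolving compactly supported measure μ, such that (μ, v + 𝟙_ω u) is a weak solution of ∂_t μ + ∇·((v + 𝟙_ω u) μ) = 0 on [0, T₀*] with μ(0) = μ⁰ and supp(μ(T₀*)) ⊂ ω. -/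

import Mathlib

open MeasureTheory Set
open scoped ENNReal NNReal

noncomputable section

/-- The Euclidean space `ℝ^d`. -/
abbrev Euc (d : ℕ) := EuclideanSpace ℝ (Fin d)

/-- The support of a Borel measure: points all of whose open neighborhoods have
positive measure. -/
def msupport {d : ℕ} (μ : Measure (Euc d)) : Set (Euc d) :=
  {x | ∀ U : Set (Euc d), IsOpen U → x ∈ U → 0 < μ U}

/-- `Φ` is the flow of the (time-dependent) vector field `w`, in the Carathéodory
(integral) sense. -/
def IsFlow {d : ℕ} (w : Euc d → ℝ → Euc d) (Φ : ℝ → Euc d → Euc d) : Prop :=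
  ∀ x t, Φ t x = x + ∫ s in (0:ℝ)..t, w (Φ s x) s

/-- `(μ, w)` is a weak solution of the continuity equation
`∂ₜ μ + ∇·(w μ) = 0` on the time interval `[0, T]`. -/
def IsWeakSolutionOn {d : ℕ} (T : ℝ) (w : Euc d → ℝ → Euc d)
    (μ : ℝ → Measure (Euc d)) : Prop :=
  (∫⁻ t in Icc (0:ℝ) T, ∫⁻ x, (‖w x t‖₊ : ℝ≥0∞) ∂(μ t)) < ⊤ ∧
  ∀ ψ : Euc d → ℝ, ContDiff ℝ (⊤ : ℕ∞) ψ → HasCompactSupport ψ →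
    ∀ t ∈ Icc (0:ℝ) T,
      (∫ x, ψ x ∂(μ t)) - (∫ x, ψ x ∂(μ 0))
        = ∫ s in Icc (0:ℝ) t, (∫ x, (inner ℝ (gradient ψ x) (w x s) : ℝ) ∂(μ s))

lemma msupport_isClosed {d : ℕ} (μ : Measure (Euc d)) : IsClosed (msupport μ) := by
  rw [← isOpen_compl_iff, isOpen_iff_mem_nhds]
  intro x hx
  simp only [msupport, mem_compl_iff, mem_ofPred_eq, not_forall] at hx
  obtain ⟨U, hU, hxU, h⟩ := hx
  filter_upwards [hU.mem_nhds hxU] with y hy hy'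
  exact h (hy' U hU hy)

lemma msupport_subset {d : ℕ} {μ : Measure (Euc d)} {Z : Set (Euc d)} (hZ : IsClosed Z)
    (h : μ Zᶜ = 0) : msupport μ ⊆ Z := by
  intro x hx
  by_contra hxZ
  exact (hx Zᶜ hZ.isOpen_compl hxZ).ne' h

lemma msupport_compl_null {d : ℕ} (μ : Measure (Euc d)) : μ (msupport μ)ᶜ = 0 := by
  apply measure_null_of_locally_null
  intro x hx
  simp only [msupport, mem_compl_iff, mem_ofPred_eq, not_forall] at hx
  obtain ⟨U, hU, hxU, h⟩ := hx
  exact ⟨U, mem_nhdsWithin_of_mem_nhds (hU.mem_nhds hxU), by simpa using h⟩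

/-- The flow is automatically integrable along trajectories. -/
lemma flow_integrable {d : ℕ} {v : Euc d → Euc d} (hv : Continuous v) {C : ℝ}
    (hC : ∀ x, ‖v x‖ ≤ C) {Φ : ℝ → Euc d → Euc d} (hΦ : IsFlow (fun x _ => v x) Φ)
    (x : Euc d) (t : ℝ) (ht : 0 ≤ t) :
    IntervalIntegrable (fun s => v (Φ s x)) volume 0 t := by
  classical
  set f : ℝ → Euc d := fun s => v (Φ s x) with hf
  let I : Set ℝ := {s | 0 ≤ s ∧ IntervalIntegrable f volume 0 s}
  have hIc : I.OrdConnected := by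
    refine ⟨fun a ha b hb c hc => ⟨ha.1.trans hc.1, hb.2.mono_set ?_⟩⟩
    rw [uIcc_of_le hb.1, uIcc_of_le (ha.1.trans hc.1)]
    exact Icc_subset_Icc_right hc.2
  have hIm : MeasurableSet I := hIc.measurableSet
  have hcont : ContinuousOn (fun s => Φ s x) I := by
    intro a ha
    have : ContinuousOn (fun s => x + ∫ r in (0:ℝ)..s, f r) I := by
      apply continuousOn_const.add
      intro a ha
      by_cases hmax : ∃ b ∈ I, a < b
      · obtain ⟨b, hb, hab⟩ := hmax
        have h1 := intervalIntegral.continuousOn_primitive_interval' hb.2 (left_mem_uIcc)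
        rw [uIcc_of_le hb.1] at h1
        refine (h1 a ⟨ha.1, hab.le⟩).mono_of_mem_nhdsWithin ?_
        filter_upwards [self_mem_nhdsWithin, mem_nhdsWithin_of_mem_nhds (Iio_mem_nhds hab)] with c hc hc'
        exact ⟨hc.1, le_of_lt hc'⟩
      · push Not at hmax
        have h1 := intervalIntegral.continuousOn_primitive_interval' ha.2 (left_mem_uIcc)
        rw [uIcc_of_le ha.1] at h1
        exact (h1 a ⟨ha.1, le_rfl⟩).mono fun c hc => ⟨hc.1, hmax c hc⟩
    exact (this.congr fun s _ => hΦ x s) a ha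
  have hmeas1 : AEStronglyMeasurable f (volume.restrict I) :=
    (hv.comp_continuousOn hcont).aestronglyMeasurable hIm
  have hmeas2 : AEStronglyMeasurable f (volume.restrict (Ici 0 \ I)) := by
    refine (aestronglyMeasurable_const (b := v x)).congr ?_
    filter_upwards [ae_restrict_mem (measurableSet_Ici.diff hIm)] with s hs
    have : ¬ IntervalIntegrable f volume 0 s := fun h => hs.2 ⟨hs.1, h⟩
    have h2 := hΦ x s
    rw [intervalIntegral.integral_undef this, add_zero] at h2
    simp [hf, h2]
  have hmeas : AEStronglyMeasurable f (volume.restrict (Ioc 0 t)) := by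
    refine (aestronglyMeasurable_union_iff.2 ⟨hmeas1, hmeas2⟩).mono_measure
      (Measure.restrict_mono ?_ le_rfl)
    intro s hs
    by_cases h : s ∈ I
    · exact Or.inl h
    · exact Or.inr ⟨hs.1.le, h⟩
  rw [intervalIntegrable_iff_integrableOn_Ioc_of_le ht]
  exact Integrable.of_bound hmeas C (Filter.Eventually.of_forall fun s => hC _)

/-- Regularity of the flow for nonnegative times. -/
lemma flow_regular {d : ℕ} {v : Euc d → Euc d} {K : ℝ≥0} (hv : LipschitzWith K v) {C : ℝ}
    (hC : ∀ x, ‖v x‖ ≤ C) {Φ : ℝ → Euc d → Euc d} (hΦ : IsFlow (fun x _ => v x) Φ) :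
    ∃ G : ℝ → Euc d → Euc d, (∀ t x, 0 ≤ t → G t x = Φ t x) ∧ (∀ x, G 0 x = x) ∧
      Continuous (fun q : ℝ × Euc d => G q.1 q.2) ∧
      (∀ t x, 0 ≤ t → HasDerivWithinAt (fun s => G s x) (v (G t x)) (Ici t) t) ∧
      (∀ t x, 0 < t → HasDerivAt (fun s => G s x) (v (G t x)) t) ∧
      (∀ t x, 0 ≤ t → dist (G t x) x ≤ C * t) := by
  let G : ℝ → Euc d → Euc d := fun t x => Φ (max t 0) x
  have hG : ∀ t x, 0 ≤ t → G t x = Φ t x := fun t x ht => by simp [G, max_eq_left ht]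
  have hG0 : ∀ x, G 0 x = x := fun x => by
    rw [hG 0 x le_rfl, hΦ x 0]; simp
  have hint : ∀ t x, 0 ≤ t → IntervalIntegrable (fun s => v (G s x)) volume 0 t := by
    intro t x ht
    refine (flow_integrable hv.continuous hC hΦ x t ht).congr ?_
    intro s hs
    rw [uIoc_of_le ht] at hs
    simp only [hG s x hs.1.le]
  have hGi : ∀ t x, 0 ≤ t → G t x = x + ∫ s in (0:ℝ)..t, v (G s x) := by
    intro t x ht
    rw [hG t x ht, hΦ x t]
    congr 1
    apply intervalIntegral.integral_congr
    intro s hs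
    rw [uIcc_of_le ht] at hs
    simp only [hG s x hs.1]
  have hlip : ∀ x s t, 0 ≤ s → s ≤ t → dist (G s x) (G t x) ≤ C * (t - s) := by
    intro x s t hs hst
    rw [hGi s x hs, hGi t x (hs.trans hst), dist_add_left, dist_comm, dist_eq_norm,
      intervalIntegral.integral_interval_sub_left (hint t x (hs.trans hst)) (hint s x hs)]
    refine (intervalIntegral.norm_integral_le_of_norm_le_const (fun r _ => hC _)).trans ?_
    rw [abs_of_nonneg (by linarith)]
  have hC0 : 0 ≤ C := (norm_nonneg _).trans (hC 0)
  have hGmax : ∀ t x, G t x = G (max t 0) x := fun t x => by simp [G]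
  have hlip' : ∀ x s t, dist (G s x) (G t x) ≤ C * |t - s| := by
    intro x s t
    rw [hGmax s, hGmax t]
    have h1 : |max t 0 - max s 0| ≤ |t - s| := abs_max_sub_max_le_abs t s 0
    refine le_trans ?_ (mul_le_mul_of_nonneg_left h1 hC0)
    rcases le_total (max s 0) (max t 0) with h | h
    · rw [abs_of_nonneg (by linarith)]
      exact hlip x _ _ (le_max_right _ _) h
    · rw [abs_of_nonpos (by linarith), dist_comm, neg_sub]
      exact hlip x _ _ (le_max_right _ _) h
  have hct : ∀ x, Continuous (fun s => G s x) := fun x => by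
    refine (LipschitzWith.of_dist_le_mul (K := ⟨C, hC0⟩) fun s t => ?_).continuous
    rw [dist_comm s t, Real.dist_eq]
    exact hlip' x s t
  have hder : ∀ x t, HasDerivAt (fun s => x + ∫ r in (0:ℝ)..s, v (G r x)) (v (G t x)) t := by
    intro x t
    exact ((hv.continuous.comp (hct x)).integral_hasStrictDerivAt 0 t).hasDerivAt.const_add x
  have hderW : ∀ t x, 0 ≤ t → HasDerivWithinAt (fun s => G s x) (v (G t x)) (Ici t) t := by
    intro t x ht
    refine (hder x t).hasDerivWithinAt.congr (fun s hs => hGi s x (ht.trans hs)) (hGi t x ht)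
  have hgron : ∀ x y t, 0 ≤ t → dist (G t x) (G t y) ≤ dist x y * Real.exp (K * t) := by
    intro x y t ht
    have := dist_le_of_trajectories_ODE (v := fun _ => v) (K := K) (a := 0) (b := t) (δ := dist x y)
      (f := fun s => G s x) (g := fun s => G s y) (fun _ => hv)
      (hct x).continuousOn (fun s hs => hderW s x hs.1)
      (hct y).continuousOn (fun s hs => hderW s y hs.1) (by simp [hG0]) t ⟨ht, le_rfl⟩
    simpa using this
  refine ⟨G, hG, hG0, ?_, hderW, ?_, ?_⟩
  · rw [continuous_iff_continuousAt]
    rintro ⟨t, x⟩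
    unfold ContinuousAt
    rw [tendsto_iff_dist_tendsto_zero]
    refine squeeze_zero (g := fun q : ℝ × Euc d => dist q.2 x * Real.exp (K * max q.1 0)
      + C * |t - q.1|) (fun _ => dist_nonneg) ?_ ?_
    · rintro ⟨s, y⟩
      refine (dist_triangle _ (G s x) _).trans (add_le_add ?_ (hlip' x s t))
      rw [hGmax s y, hGmax s x]
      exact hgron y x _ (le_max_right _ _)
    · have : Continuous (fun q : ℝ × Euc d => dist q.2 x * Real.exp (K * max q.1 0)
        + C * |t - q.1|) := by fun_prop
      have h := this.tendsto (t, x)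
      simpa using h
  · intro t x ht
    refine (hder x t).congr_of_eventuallyEq ?_
    filter_upwards [Ioi_mem_nhds ht] with s hs using hGi s x (le_of_lt hs)
  · intro t x ht
    have := hlip x 0 t le_rfl ht
    rw [hG0, sub_zero] at this
    rwa [dist_comm]

/-- The (capped) first hitting time of a closed set. -/
lemma exists_hitting {d : ℕ} {G : ℝ → Euc d → Euc d}
    (hG : Continuous (fun q : ℝ × Euc d => G q.1 q.2)) {F : Set (Euc d)} (hF : IsClosed F)
    {T : ℝ} (hT : 0 < T) :
    ∃ τ : Euc d → ℝ, Measurable τ ∧ (∀ x, 0 ≤ τ x) ∧ (∀ x, τ x ≤ T) ∧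
      (∀ x s, 0 ≤ s → s < τ x → G s x ∉ F) ∧
      (∀ x, G (τ x) x ∈ F ∨ τ x = T) := by
  let S : Set (ℝ × Euc d) := {q | 0 ≤ q.1 ∧ (G q.1 q.2 ∈ F ∨ T ≤ q.1)}
  have hS : IsClosed S :=
    (isClosed_le continuous_const continuous_fst).inter
      ((hF.preimage hG).union (isClosed_le continuous_const continuous_fst))
  let Sx : Euc d → Set ℝ := fun x => {s | (s, x) ∈ S}
  have hSx : ∀ x, IsClosed (Sx x) := fun x => hS.preimage (by fun_prop : Continuous fun s : ℝ => (s, x))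
  have hb : ∀ x, BddBelow (Sx x) := fun x => ⟨0, fun s hs => hs.1⟩
  have hTm : ∀ x, T ∈ Sx x := fun x => ⟨hT.le, Or.inr le_rfl⟩
  have hmem : ∀ x, sInf (Sx x) ∈ Sx x := fun x => (hSx x).csInf_mem ⟨T, hTm x⟩ (hb x)
  have hle : ∀ x, sInf (Sx x) ≤ T := fun x => csInf_le (hb x) (hTm x)
  refine ⟨fun x => sInf (Sx x), ?_, fun x => (hmem x).1, hle, ?_, ?_⟩
  · refine measurable_of_Iic fun a => IsClosed.measurableSet ?_
    have : (fun x => sInf (Sx x)) ⁻¹' Iic a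
        = Prod.snd '' ((fun q : Icc (0:ℝ) a × Euc d => ((q.1 : ℝ), q.2)) ⁻¹' S) := by
      ext x
      constructor
      · intro hx
        exact ⟨(⟨sInf (Sx x), (hmem x).1, hx⟩, x), hmem x, rfl⟩
      · rintro ⟨⟨s, y⟩, hs, rfl⟩
        exact (csInf_le (hb y) (show (s : ℝ) ∈ Sx y from hs)).trans s.2.2
    rw [this]
    exact isClosedMap_snd_of_compactSpace _ (hS.preimage (by fun_prop))
  · intro x s hs hst h
    exact absurd (csInf_le (hb x) (show s ∈ Sx x from ⟨hs, Or.inl h⟩)) (not_le.2 hst)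
  · intro x
    rcases (hmem x).2 with h | h
    · exact Or.inl h
    · exact Or.inr (le_antisymm (hle x) h)


/-- Storing the whole mass of `μ⁰` inside `ω` at time `T₀*`, with a Borel
localized control, in the sense of weak solutions of the continuity equation. -/
theorem store_mass_borel
    (d : ℕ) (ω : Set (Euc d)) (hω : ω.Nonempty) (hωo : IsOpen ω) (hωc : IsConnected ω)
    (v : Euc d → Euc d) (hvL : ∃ K : ℝ≥0, LipschitzWith K v)
    (hvB : ∃ C : ℝ, ∀ x, ‖v x‖ ≤ C)
    (μ0 : Measure (Euc d)) [IsProbabilityMeasure μ0]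
    (h0K : IsCompact (msupport μ0))
    (T0 : ℝ) (hT0 : 0 < T0)
    (ω0 : Set (Euc d)) (hω0 : ω0.Nonempty) (hω0o : IsOpen ω0) (hω0c : closure ω0 ⊆ ω)
    (Φv : ℝ → Euc d → Euc d) (hΦv : IsFlow (fun x _ => v x) Φv)
    (hgeo : ∀ x ∈ msupport μ0, ∃ t ∈ Icc (0:ℝ) T0, Φv t x ∈ ω0) :
    ∃ (u : Euc d → ℝ → Euc d) (μ : ℝ → Measure (Euc d)),
      Measurable (fun q : Euc d × ℝ => u q.1 q.2) ∧
      (∀ x t, x ∉ ω → u x t = 0) ∧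
      (∀ t ∈ Icc (0:ℝ) T0, IsCompact (msupport (μ t))) ∧
      IsWeakSolutionOn T0 (fun x t => v x + u x t) μ ∧
      μ 0 = μ0 ∧ msupport (μ T0) ⊆ ω := by
  obtain ⟨K, hK⟩ := hvL
  obtain ⟨C, hC⟩ := hvB
  have hC0 : 0 ≤ C := (norm_nonneg _).trans (hC 0)
  obtain ⟨G, hGΦ, hG0, hGc, -, hGd, hGdist⟩ := flow_regular hK hC hΦv
  set F : Set (Euc d) := closure ω0 with hFdef
  have hF : IsClosed F := isClosed_closure
  obtain ⟨τ, hτm, hτ0, hτT, hτlt, hτF⟩ := exists_hitting hGc hF hT0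
  have hτsupp : ∀ x ∈ msupport μ0, G (τ x) x ∈ F := by
    intro x hx
    obtain ⟨t, ht, hmem⟩ := hgeo x hx
    rcases hτF x with h | h
    · exact h
    · have h1 : G t x ∈ F := by rw [hGΦ t x ht.1]; exact subset_closure hmem
      rcases lt_or_ge t (τ x) with h2 | h2
      · exact absurd h1 (hτlt x t ht.1 h2)
      · have : t = τ x := le_antisymm (ht.2.trans h.ge) h2
        rwa [← this]
  let Ψ : ℝ → Euc d → Euc d := fun t x => G (min t (τ x)) x
  have hΨm : Measurable (fun q : ℝ × Euc d => Ψ q.1 q.2) :=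
    hGc.measurable.comp (((measurable_fst).min (hτm.comp measurable_snd)).prodMk measurable_snd)
  have hΨt : ∀ t, Measurable (Ψ t) := fun t => hΨm.comp measurable_prodMk_left
  let w : Euc d → Euc d := fun x => v x + F.indicator (fun y => - v y) x
  have hwF : ∀ x ∈ F, w x = 0 := fun x hx => by simp [w, hx]
  have hwn : ∀ x, x ∉ F → w x = v x := fun x hx => by simp [w, hx]
  have hum : Measurable (F.indicator (fun y => - v y)) :=
    (hK.continuous.measurable.neg).indicator hF.measurableSet
  have hwm : Measurable w := hK.continuous.measurable.add hum
  have hwC : ∀ x, ‖w x‖ ≤ C := fun x => by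
    by_cases hx : x ∈ F
    · rw [hwF x hx]; simpa using hC0
    · rw [hwn x hx]; exact hC x
  have hsuppae : ∀ᵐ x ∂μ0, x ∈ msupport μ0 := msupport_compl_null μ0
  have hΨ0 : Ψ 0 = id := by
    funext x
    simp [Ψ, min_eq_left (hτ0 x), hG0]
  refine ⟨fun x _ => F.indicator (fun y => - v y) x, fun t => μ0.map (Ψ t),
    hum.comp measurable_fst, ?_, ?_, ⟨?_, ?_⟩, ?_, ?_⟩
  · intro x t hx
    exact indicator_of_notMem (fun h => hx (hω0c h)) _
  · intro t ht
    obtain ⟨R, hR⟩ := h0K.isBounded.subset_closedBall (0 : Euc d)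
    refine (isCompact_closedBall (0 : Euc d) (C * T0 + R)).of_isClosed_subset
      (msupport_isClosed _) (msupport_subset Metric.isClosed_closedBall ?_)
    rw [Measure.map_apply (hΨt t) Metric.isClosed_closedBall.measurableSet.compl]
    have h : ∀ᵐ x ∂μ0, Ψ t x ∈ Metric.closedBall (0 : Euc d) (C * T0 + R) := by
      filter_upwards [hsuppae] with x hx
      have h1 := hGdist (min t (τ x)) x (le_min ht.1 (hτ0 x))
      have h2 : C * min t (τ x) ≤ C * T0 :=
        mul_le_mul_of_nonneg_left ((min_le_left _ _).trans ht.2) hC0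
      have h3 : dist x 0 ≤ R := hR hx
      exact (dist_triangle _ x _).trans (add_le_add (h1.trans h2) h3)
    exact h
  · have hp : ∀ t, IsProbabilityMeasure (μ0.map (Ψ t)) := fun t =>
      Measure.isProbabilityMeasure_map (hΨt t).aemeasurable
    calc (∫⁻ t in Icc (0:ℝ) T0, ∫⁻ x, (‖w x‖₊ : ℝ≥0∞) ∂(μ0.map (Ψ t)))
        ≤ ∫⁻ t in Icc (0:ℝ) T0, ENNReal.ofReal C := by
          refine lintegral_mono fun t => ?_
          have := hp t
          calc ∫⁻ x, (‖w x‖₊ : ℝ≥0∞) ∂(μ0.map (Ψ t))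
              ≤ ∫⁻ x, ENNReal.ofReal C ∂(μ0.map (Ψ t)) := by
                refine lintegral_mono fun x => ?_
                rw [← enorm_eq_nnnorm, ← ofReal_norm]
                exact ENNReal.ofReal_le_ofReal (hwC x)
            _ = ENNReal.ofReal C := by simp
      _ < ⊤ := by
          simp [ENNReal.mul_lt_top]
  · intro ψ hψ hψc t ht
    have hψd : Differentiable ℝ ψ := hψ.differentiable (by simp)
    have hψcont : Continuous ψ := hψ.continuous
    have hgi : ∀ x y, inner ℝ (gradient ψ x) y = fderiv ℝ ψ x y := fun x y => by
      simp [gradient, InnerProductSpace.toDual_symm_apply]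
    have hfc : Continuous (fderiv ℝ ψ) := hψ.continuous_fderiv (by simp)
    obtain ⟨B, hB⟩ := hfc.bounded_above_of_compact_support (hψc.fderiv (𝕜 := ℝ))
    obtain ⟨B', hB'⟩ := hψcont.bounded_above_of_compact_support hψc
    let g : Euc d → ℝ := fun x => fderiv ℝ ψ x (w x)
    have hgm : Measurable g := by
      have h1 : Measurable (fun x => (fderiv ℝ ψ x, w x)) := hfc.measurable.prodMk hwm
      exact (isBoundedBilinearMap_apply (𝕜 := ℝ) (E := Euc d) (F := ℝ)).continuous.measurable.comp h1
    have hgb : ∀ x, ‖g x‖ ≤ B * C := fun x =>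
      ((fderiv ℝ ψ x).le_opNorm _).trans
        (mul_le_mul (hB x) (hwC x) (norm_nonneg _) ((norm_nonneg _).trans (hB x)))
    -- pointwise identity
    have hpt : ∀ x, ψ (Ψ t x) - ψ x = ∫ s in Icc (0:ℝ) t, g (Ψ s x) := by
      intro x
      set m := min t (τ x) with hm
      have hm0 : 0 ≤ m := le_min ht.1 (hτ0 x)
      let h : ℝ → ℝ := fun s => fderiv ℝ ψ (G s x) (v (G s x))
      have hGx : Continuous (fun s => G s x) := hGc.comp (by fun_prop : Continuous fun s : ℝ => (s, x))
      have hhc : Continuous h :=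
        (hfc.comp hGx).clm_apply (hK.continuous.comp hGx)
      have hftc : ∫ s in (0:ℝ)..m, h s = ψ (G m x) - ψ (G 0 x) :=
        intervalIntegral.integral_eq_sub_of_hasDerivAt_of_le (f := fun s => ψ (G s x)) hm0
          (hψcont.comp hGx).continuousOn
          (fun s hs => (hψd (G s x)).hasFDerivAt.comp_hasDerivAt s (hGd s x hs.1))
          (hhc.intervalIntegrable _ _)
      have e1 : ∫ s in Icc (0:ℝ) t, g (Ψ s x) = ∫ s in Icc (0:ℝ) t, (Ico 0 m).indicator h s := by
        refine integral_congr_ae ?_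
        filter_upwards [ae_restrict_mem measurableSet_Icc,
          (Measure.ae_ne (volume.restrict (Icc (0:ℝ) t)) t)] with s hs hst
        have hst' : s < t := lt_of_le_of_ne hs.2 hst
        rcases lt_or_ge s (τ x) with h1 | h1
        · rw [indicator_of_mem (show s ∈ Ico 0 m from ⟨hs.1, lt_min hst' h1⟩)]
          have : Ψ s x = G s x := by simp [Ψ, min_eq_left h1.le]
          simp only [g, h, this, hwn _ (hτlt x s hs.1 h1)]
        · rw [indicator_of_notMem (fun h2 : s ∈ Ico 0 m => absurd (h2.2.trans_le (min_le_right _ _)) (not_lt.2 h1))]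
          have : Ψ s x = G (τ x) x := by simp [Ψ, min_eq_right h1]
          have hFm : G (τ x) x ∈ F := by
            rcases hτF x with h2 | h2
            · exact h2
            · exact absurd (h2 ▸ h1) (not_le.2 (hst'.trans_le ht.2))
          simp only [g, this, hwF _ hFm, map_zero]
      rw [e1, setIntegral_indicator measurableSet_Ico]
      have e2 : Icc 0 t ∩ Ico 0 m = Ico 0 m :=
        inter_eq_right.2 fun s hs => ⟨hs.1, hs.2.le.trans (min_le_left _ _)⟩
      rw [e2, integral_Ico_eq_integral_Ioc, ← intervalIntegral.integral_of_le hm0, hftc, hG0]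
    have hcv : ∀ s, ∫ x, (inner ℝ (gradient ψ x) (w x) : ℝ) ∂(μ0.map (Ψ s)) = ∫ x, g (Ψ s x) ∂μ0 := by
      intro s
      simp only [hgi]
      exact integral_map (hΨt s).aemeasurable hgm.aestronglyMeasurable
    have hψi : ∀ f : Euc d → Euc d, Measurable f → Integrable (fun x => ψ (f x)) μ0 := fun f hf =>
      Integrable.of_bound (hψcont.measurable.comp hf).aestronglyMeasurable B'
        (Filter.Eventually.of_forall fun x => hB' _)
    change (∫ x, ψ x ∂(μ0.map (Ψ t))) - (∫ x, ψ x ∂(μ0.map (Ψ 0)))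
        = ∫ s in Icc (0:ℝ) t, (∫ x, (inner ℝ (gradient ψ x) (w x) : ℝ) ∂(μ0.map (Ψ s)))
    simp only [hcv]
    rw [integral_map (hΨt t).aemeasurable hψcont.aestronglyMeasurable, hΨ0, Measure.map_id,
      ← integral_sub (hψi _ (hΨt t)) (hψi (fun x => x) measurable_id)]
    simp only [hpt]
    refine integral_integral_swap (f := fun x s => g (Ψ s x)) ?_
    refine Integrable.of_bound (C := B * C) ?_ (Filter.Eventually.of_forall fun q => hgb _)
    exact (hgm.comp (hΨm.comp measurable_swap)).aestronglyMeasurable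
  · simp only [hΨ0, Measure.map_id]
  · refine (msupport_subset hF ?_).trans hω0c
    rw [Measure.map_apply (hΨt T0) hF.measurableSet.compl]
    have h : ∀ᵐ x ∂μ0, Ψ T0 x ∈ F := by
      filter_upwards [hsuppae] with x hx
      simpa [Ψ, min_eq_right (hτT x)] using hτsupp x hx
    exact h
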